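/- The class of occurrence nets is a proper subclass of the class of well-formed acyclic nets, which in turn is a proper subclass of the class of acyclic nets: ON ⊂ WFAN ⊂ AN. -/

import Mathlib

/-- A net: a triple of places, transitions, and a flow relation. -/
structure Net (α : Type*) where
  places : Set α
  transitions : Set α
  flow : α → α → Prop

namespace Net

variable {α : Type*}

/-- The set of direct predecessors (preset) of a node. -/
def pre (N : Net α) (x : α) : Set α := {z | N.flow z x}

/-- The set of direct successors (postset) of a node. -/
def post (N : Net α) (x : α) : Set α := {z | N.flow x z}

/-- Preset of a set of nodes. -/
def preSet (N : Net α) (X : Set α) : Set α := ⋃ x ∈ X, N.pre x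

/-- Postset of a set of nodes. -/
def postSet (N : Net α) (X : Set α) : Set α := ⋃ x ∈ X, N.post x

/-- Initial places: places with empty preset. -/
def initPlaces (N : Net α) : Set α := {p ∈ N.places | N.pre p = ∅}

/-- Final places: places with empty postset. -/
def finPlaces (N : Net α) : Set α := {p ∈ N.places | N.post p = ∅}

/-- An acyclic net: places and transitions are disjoint finite sets, places nonempty,
the flow relation relates only places to transitions and vice versa, is acyclic, and
every transition has at least one pre-place and one post-place. -/
def IsAcyclicNet (N : Net α) : Prop :=
  N.places.Finite ∧ N.transitions.Finite ∧
  Disjoint N.places N.transitions ∧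
  (∀ x y, N.flow x y →
    (x ∈ N.places ∧ y ∈ N.transitions) ∨ (x ∈ N.transitions ∧ y ∈ N.places)) ∧
  N.places.Nonempty ∧
  (∀ x, ¬ Relation.TransGen N.flow x x) ∧
  (∀ t ∈ N.transitions, (N.pre t).Nonempty ∧ (N.post t).Nonempty)

/-- An occurrence net: an acyclic net with `|pre p| ≤ 1` and `|post p| ≤ 1` for each place. -/
def IsOccurrenceNet (N : Net α) : Prop :=
  IsAcyclicNet N ∧ ∀ p ∈ N.places, (N.pre p).Subsingleton ∧ (N.post p).Subsingleton

/-- A backward deterministic acyclic net: an acyclic net with `|pre p| ≤ 1` for each place. -/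
def IsBDAN (N : Net α) : Prop :=
  IsAcyclicNet N ∧ ∀ p ∈ N.places, (N.pre p).Subsingleton

/-- `N` is a subnet of `M`: nonempty set of places included, transitions included,
flow is the restriction of that of `M`, and every transition of `N` retains its
full preset and postset from `M`. -/
def IsSubnet (N M : Net α) : Prop :=
  N.places.Nonempty ∧ N.places ⊆ M.places ∧ N.transitions ⊆ M.transitions ∧
  (∀ x y, N.flow x y ↔ M.flow x y ∧
    ((x ∈ N.places ∧ y ∈ N.transitions) ∨ (x ∈ N.transitions ∧ y ∈ N.places))) ∧
  (∀ t ∈ N.transitions, N.pre t = M.pre t ∧ N.post t = M.post t)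

/-- `N` is a co-initial subnet of `M` : a subnet with the same initial places. -/
def CoInitial (N M : Net α) : Prop := IsSubnet N M ∧ N.initPlaces = M.initPlaces

/-- A step: a nonempty set of transitions with pairwise disjoint presets. -/
def IsStep (N : Net α) (U : Set α) : Prop :=
  U.Nonempty ∧ U ⊆ N.transitions ∧ ∀ t ∈ U, ∀ u ∈ U, t ≠ u → N.pre t ∩ N.pre u = ∅

/-- A step `U` is enabled at marking `M` if all its pre-places are in `M`. -/
def Enabled (N : Net α) (M U : Set α) : Prop := IsStep N U ∧ N.preSet U ⊆ M

/-- Executing an enabled step `U` at `M` yields `M' = (M ∪ post U) \ pre U`. -/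
def StepTrans (N : Net α) (M U M' : Set α) : Prop :=
  Enabled N M U ∧ M' = (M ∪ N.postSet U) \ N.preSet U

/-- Step sequences from a marking to a marking. -/
inductive StepSeqFrom (N : Net α) : Set α → List (Set α) → Set α → Prop
  | nil (M : Set α) : StepSeqFrom N M [] M
  | cons {M U M' σ M''} : StepTrans N M U M' → StepSeqFrom N M' σ M'' →
      StepSeqFrom N M (U :: σ) M''

/-- The initial marking: the set of initial places. -/
def initMarking (N : Net α) : Set α := N.initPlaces

/-- Step sequences executable from the initial marking. -/
def sseq (N : Net α) : Set (List (Set α)) := {σ | ∃ M, StepSeqFrom N N.initMarking σ M}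

/-- Mixed step sequences: alternating steps and resulting markings from a marking. -/
inductive MixFrom (N : Net α) : Set α → List (Set α × Set α) → Prop
  | nil (M : Set α) : MixFrom N M []
  | cons {M U M' l} : StepTrans N M U M' → MixFrom N M' l → MixFrom N M ((U, M') :: l)

/-- Mixed step sequences from the initial marking, represented as the initial marking
paired with the list of consecutive (step, marking) pairs. -/
def mixsseq (N : Net α) : Set (Set α × List (Set α × Set α)) :=
  {p | p.1 = N.initMarking ∧ MixFrom N p.1 p.2}

/-- Markings reachable from the initial marking. -/
def reach (N : Net α) : Set (Set α) := {M | ∃ σ, StepSeqFrom N N.initMarking σ M}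

/-- Firing sequences: step sequences all of whose steps are singletons. -/
def fseq (N : Net α) : Set (List (Set α)) :=
  {σ | σ ∈ N.sseq ∧ ∀ U ∈ σ, ∃ t, U = {t}}

/-- Maximal step sequences: no step can be appended. -/
def maxsseq (N : Net α) : Set (List (Set α)) :=
  {σ | σ ∈ N.sseq ∧ ¬ ∃ U, σ ++ [U] ∈ N.sseq}

/-- Maximal mixed step sequences: no step and marking can be appended. -/
def maxmixsseq (N : Net α) : Set (Set α × List (Set α × Set α)) :=
  {p | p ∈ N.mixsseq ∧ ¬ ∃ U M, (p.1, p.2 ++ [(U, M)]) ∈ N.mixsseq}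

/-- Final reachable markings: markings reached by maximal step sequences. -/
def finreach (N : Net α) : Set (Set α) :=
  {M | ∃ σ ∈ N.maxsseq, StepSeqFrom N N.initMarking σ M}

/-- A step sequence is well-formed if post-sets of distinct transitions in the same
step are disjoint, and post-sets of distinct steps are disjoint. -/
def WellFormedSeq (N : Net α) (σ : List (Set α)) : Prop :=
  (∀ U ∈ σ, ∀ t ∈ U, ∀ u ∈ U, t ≠ u → N.post t ∩ N.post u = ∅) ∧
  σ.Pairwise (fun U V => N.postSet U ∩ N.postSet V = ∅)

/-- The set of transitions occurring in a step sequence. -/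
def transOf (σ : List (Set α)) : Set α := {t | ∃ U ∈ σ, t ∈ U}

/-- A net is well-formed if each transition occurs in at least one step sequence and
all step sequences are well-formed. -/
def WellFormedNet (N : Net α) : Prop :=
  (∀ t ∈ N.transitions, ∃ σ ∈ N.sseq, t ∈ transOf σ) ∧
  (∀ σ ∈ N.sseq, N.WellFormedSeq σ)

/-- Scenarios of a net: occurrence nets that are co-initial subnets of it. -/
def scenarios (N : Net α) : Set (Net α) :=
  {S | IsOccurrenceNet S ∧ CoInitial S N}

/-- Maximal scenarios: scenarios not strictly included (co-initially) in another scenario. -/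
def maxscenarios (N : Net α) : Set (Net α) :=
  {S | S ∈ N.scenarios ∧ ¬ ∃ S', S' ∈ N.scenarios ∧ S' ≠ S ∧ CoInitial S S'}

/-- The scenario induced by a (well-formed) step sequence `σ`:
transitions are those occurring in `σ`, places are the initial places together with
the postsets of those transitions, and the flow is the restriction. -/
def inducedScenario (N : Net α) (σ : List (Set α)) : Net α where
  places := N.initMarking ∪ N.postSet (transOf σ)
  transitions := transOf σ
  flow := fun x y => N.flow x y ∧
    ((x ∈ N.initMarking ∪ N.postSet (transOf σ) ∧ y ∈ transOf σ) ∨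
     (x ∈ transOf σ ∧ y ∈ N.initMarking ∪ N.postSet (transOf σ)))

end Net

/-!
A set `H` of fired transitions determines a marking, its cut: the places all of whose producers,
and none of whose consumers, have fired. In every net the marking reached from the initial one by
firing `H` contains the cut of `H`. In a backward deterministic net it is also contained in it, so
a transition whose input places are marked has not fired yet: no transition fires twice, and since
distinct transitions have disjoint postsets, every step sequence is well-formed. In an occurrence
net the input places of a causally minimal unfired transition lie in the cut, so that transition is
enabled; hence a step sequence firing as many transitions as possible fires all of them.

The fork `p → {t, u}`, `t → q`, `u → r` separates occurrence nets from well-formed nets, and its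
reverse, in which the step `{t, u}` marks `p` twice, separates these from acyclic nets.
-/

namespace Net

variable {α : Type*} {N : Net α} {M M' H U V : Set α} {σ : List (Set α)} {p s t u x : α}

theorem mem_pre : x ∈ N.pre t ↔ N.flow x t := Iff.rfl

theorem mem_post : x ∈ N.post t ↔ N.flow t x := Iff.rfl

theorem mem_preSet : p ∈ N.preSet U ↔ ∃ t ∈ U, p ∈ N.pre t := Set.mem_iUnion₂.trans (by simp)

theorem mem_postSet : p ∈ N.postSet U ↔ ∃ t ∈ U, p ∈ N.post t := Set.mem_iUnion₂.trans (by simp)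

theorem subset_transOf (hU : U ∈ σ) : U ⊆ transOf σ := fun _ ht => ⟨U, hU, ht⟩

theorem transOf_nil : transOf ([] : List (Set α)) = ∅ := by simp [transOf]

theorem transOf_cons : transOf (U :: σ) = U ∪ transOf σ := by ext; simp [transOf]

theorem transOf_concat : transOf (σ ++ [U]) = transOf σ ∪ U := by
  ext; simp [transOf, or_and_right, exists_or]

namespace IsAcyclicNet

theorem pre_subset_places (hN : N.IsAcyclicNet) (ht : t ∈ N.transitions) :
    N.pre t ⊆ N.places := by
  obtain ⟨-, -, hdisj, hflow, -⟩ := hN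
  exact fun p hp => (hflow p t hp).elim And.left
    fun h => (Set.disjoint_left.mp hdisj h.2 ht).elim

theorem post_subset_places (hN : N.IsAcyclicNet) (ht : t ∈ N.transitions) :
    N.post t ⊆ N.places := by
  obtain ⟨-, -, hdisj, hflow, -⟩ := hN
  exact fun p hp => (hflow t p hp).elim
    (fun h => (Set.disjoint_left.mp hdisj h.1 ht).elim) And.right

theorem pre_subset_transitions (hN : N.IsAcyclicNet) (hp : p ∈ N.places) :
    N.pre p ⊆ N.transitions := by
  obtain ⟨-, -, hdisj, hflow, -⟩ := hN
  exact fun t ht => (hflow t p ht).elim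
    (fun h => (Set.disjoint_left.mp hdisj hp h.2).elim) And.left

theorem pre_nonempty (hN : N.IsAcyclicNet) (ht : t ∈ N.transitions) : (N.pre t).Nonempty :=
  (hN.2.2.2.2.2.2 t ht).1

theorem exists_minimal_notMem (hN : N.IsAcyclicNet) (hH : ¬ N.transitions ⊆ H) :
    ∃ s ∈ N.transitions, s ∉ H ∧ ∀ p ∈ N.pre s, N.pre p ⊆ H := by
  have : IsStrictOrder α (Relation.TransGen N.flow) :=
    { irrefl := hN.2.2.2.2.2.1, trans := fun _ _ _ => Relation.TransGen.trans }
  have hwf : (N.transitions \ H).WellFoundedOn (Relation.TransGen N.flow) :=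
    (hN.2.1.sdiff (t := H)).wellFoundedOn
  obtain ⟨t, ht⟩ := Set.not_subset.mp hH
  obtain ⟨⟨s, hsN, hsH⟩, -, hmin⟩ := WellFounded.has_min hwf Set.univ ⟨⟨t, ht⟩, trivial⟩
  refine ⟨s, hsN, hsH, fun p hp u hu => by_contra fun huH => ?_⟩
  have huN : u ∈ N.transitions := hN.pre_subset_transitions (hN.pre_subset_places hsN hp) hu
  exact hmin ⟨u, huN, huH⟩ trivial (.tail (.single hu) hp)

end IsAcyclicNet

section Steps

theorem enabled_singleton (ht : t ∈ N.transitions) (hM : N.pre t ⊆ M) : N.Enabled M {t} := by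
  refine ⟨⟨Set.singleton_nonempty t, Set.singleton_subset_iff.mpr ht, ?_⟩, ?_⟩
  · rintro a rfl b rfl hab
    exact absurd rfl hab
  · simpa [preSet] using hM

theorem Enabled.singleton_mem_sseq (h : N.Enabled N.initMarking U) : [U] ∈ N.sseq :=
  ⟨_, .cons ⟨h, rfl⟩ (.nil _)⟩

theorem StepSeqFrom.concat (hσ : N.StepSeqFrom M σ M') (hU : N.StepTrans M' U V) :
    N.StepSeqFrom M (σ ++ [U]) V := by
  induction hσ with
  | nil => exact .cons hU (.nil _)
  | cons hst _ ih => exact .cons hst (ih hU)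

theorem StepSeqFrom.subset_transitions (hσ : N.StepSeqFrom M σ M') (hU : U ∈ σ) :
    U ⊆ N.transitions := by
  induction hσ with
  | nil => simp at hU
  | cons hst _ ih =>
    rcases List.mem_cons.mp hU with rfl | hU
    · exact hst.1.1.2.1
    · exact ih hU

end Steps

section Cuts

/-- The cut of a set `H` of transitions: the places that hold a token once exactly the transitions
in `H` have fired, namely those with all producers and no consumer in `H`. -/
def cut (N : Net α) (H : Set α) : Set α :=
  {p ∈ N.places | N.pre p ⊆ H ∧ Disjoint (N.post p) H}

/-- `H` is causally closed if it contains the producers of every input place of a transition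
in `H`. -/
def CausallyClosed (N : Net α) (H : Set α) : Prop :=
  ∀ t ∈ H, ∀ p ∈ N.pre t, N.pre p ⊆ H

theorem cut_empty : N.cut ∅ = N.initMarking := by
  simp [cut, initMarking, initPlaces, Set.subset_empty_iff]

theorem causallyClosed_empty : N.CausallyClosed ∅ := fun _ ht => ht.elim

theorem StepTrans.cut_union_subset (hst : N.StepTrans M U M') (hM : N.cut H ⊆ M) :
    N.cut (H ∪ U) ⊆ M' := by
  obtain ⟨-, rfl⟩ := hst
  rintro p ⟨hp, hpre, hpost⟩
  rw [Set.disjoint_union_right] at hpost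
  refine ⟨?_, fun hpU => ?_⟩
  · by_cases hpU : p ∈ N.postSet U
    · exact .inr hpU
    · exact .inl (hM ⟨hp, fun t ht => (hpre ht).resolve_right
        fun htU => hpU (mem_postSet.mpr ⟨t, htU, ht⟩), hpost.1⟩)
  · obtain ⟨t, htU, ht⟩ := mem_preSet.mp hpU
    exact Set.disjoint_left.mp hpost.2 ht htU

theorem StepSeqFrom.cut_union_subset (hσ : N.StepSeqFrom M σ M') (hM : N.cut H ⊆ M) :
    N.cut (H ∪ transOf σ) ⊆ M' := by
  induction hσ generalizing H with
  | nil => simpa [transOf_nil] using hM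
  | cons hst _ ih =>
    rw [transOf_cons, ← Set.union_assoc]
    exact ih (hst.cut_union_subset hM)

theorem Enabled.disjoint (hN : N.IsAcyclicNet) (hU : N.Enabled M U) (hM : M ⊆ N.cut H) :
    Disjoint H U := by
  refine Set.disjoint_right.mpr fun t htU htH => ?_
  obtain ⟨p, hp⟩ := hN.pre_nonempty (hU.1.2.1 htU)
  have hpM : p ∈ M := hU.2 (mem_preSet.mpr ⟨t, htU, hp⟩)
  exact Set.disjoint_left.mp (hM hpM).2.2 hp htH

theorem Enabled.causallyClosed_union (hU : N.Enabled M U) (hM : M ⊆ N.cut H)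
    (hH : N.CausallyClosed H) : N.CausallyClosed (H ∪ U) := by
  rintro t (htH | htU) p hp
  · exact (hH t htH p hp).trans Set.subset_union_left
  · exact (hM (hU.2 (mem_preSet.mpr ⟨t, htU, hp⟩))).2.1.trans Set.subset_union_left

end Cuts

namespace IsBDAN

theorem eq_of_mem_post (hN : N.IsBDAN) (ht : t ∈ N.transitions) (hpt : p ∈ N.post t)
    (hpu : p ∈ N.post u) : t = u :=
  hN.2 p (hN.1.post_subset_places ht hpt) hpt hpu

theorem subset_cut_union (hN : N.IsBDAN) (hst : N.StepTrans M U M') (hM : M ⊆ N.cut H)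
    (hH : N.CausallyClosed H) : M' ⊆ N.cut (H ∪ U) := by
  obtain ⟨hU, rfl⟩ := hst
  rintro p ⟨hp, hpU⟩
  have hpostU : Disjoint (N.post p) U :=
    Set.disjoint_left.mpr fun t ht htU => hpU (mem_preSet.mpr ⟨t, htU, ht⟩)
  rcases hp with hpM | hp
  · obtain ⟨hpN, hpre, hpostH⟩ := hM hpM
    exact ⟨hpN, hpre.trans Set.subset_union_left, hpostH.union_right hpostU⟩
  · obtain ⟨t, htU, ht⟩ := mem_postSet.mp hp
    have htN : t ∈ N.transitions := hU.1.2.1 htU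
    have htH : t ∉ H := Set.disjoint_right.mp (hU.disjoint hN.1 hM) htU
    have hpre : N.pre p ⊆ H ∪ U := fun u hu => .inr (hN.eq_of_mem_post htN ht hu ▸ htU)
    have hpostH : Disjoint (N.post p) H :=
      Set.disjoint_left.mpr fun u hu huH => htH (hH u huH p hu ht)
    exact ⟨hN.1.post_subset_places htN ht, hpre, hpostH.union_right hpostU⟩

theorem disjoint_and_pairwise_disjoint (hN : N.IsBDAN) (hσ : N.StepSeqFrom M σ M')
    (hM : M ⊆ N.cut H) (hH : N.CausallyClosed H) :
    Disjoint H (transOf σ) ∧ σ.Pairwise Disjoint := by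
  induction hσ generalizing H with
  | nil => simp [transOf_nil]
  | @cons M U _ σ _ hst _ ih =>
    obtain ⟨hdisj, hpair⟩ :=
      ih (hN.subset_cut_union hst hM hH) (hst.1.causallyClosed_union hM hH)
    rw [Set.disjoint_union_left] at hdisj
    rw [transOf_cons, Set.disjoint_union_right, List.pairwise_cons]
    exact ⟨⟨hst.1.disjoint hN.1 hM, hdisj.1⟩,
      fun V hV => hdisj.2.mono_right (subset_transOf hV), hpair⟩

theorem pairwise_disjoint_of_mem_sseq (hN : N.IsBDAN) (hσ : σ ∈ N.sseq) :
    σ.Pairwise Disjoint :=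
  have ⟨_, hσ⟩ := hσ
  (hN.disjoint_and_pairwise_disjoint hσ cut_empty.ge causallyClosed_empty).2

theorem wellFormedSeq (hN : N.IsBDAN) (hσ : σ ∈ N.sseq) : N.WellFormedSeq σ := by
  have hsub : ∀ U ∈ σ, U ⊆ N.transitions := fun U hU => hσ.choose_spec.subset_transitions hU
  refine ⟨fun U hU t ht u _ htu => ?_,
    (hN.pairwise_disjoint_of_mem_sseq hσ).imp_of_mem fun {U V} hU _ hUV => ?_⟩
  · rw [← Set.disjoint_iff_inter_eq_empty, Set.disjoint_left]
    exact fun p hpt hpu => htu (hN.eq_of_mem_post (hsub U hU ht) hpt hpu)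
  · rw [← Set.disjoint_iff_inter_eq_empty, Set.disjoint_left]
    intro p hpU hpV
    obtain ⟨t, ht, hpt⟩ := mem_postSet.mp hpU
    obtain ⟨u, hu, hpu⟩ := mem_postSet.mp hpV
    obtain rfl : t = u := hN.eq_of_mem_post (hsub U hU ht) hpt hpu
    exact Set.disjoint_left.mp hUV ht hu

end IsBDAN

namespace IsOccurrenceNet

theorem isBDAN (hN : N.IsOccurrenceNet) : N.IsBDAN := ⟨hN.1, fun p hp => (hN.2 p hp).1⟩

theorem pre_subset_cut (hN : N.IsOccurrenceNet) (hs : s ∈ N.transitions) (hsH : s ∉ H)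
    (hH : ∀ p ∈ N.pre s, N.pre p ⊆ H) : N.pre s ⊆ N.cut H := by
  intro p hp
  have hpN : p ∈ N.places := hN.1.pre_subset_places hs hp
  refine ⟨hpN, hH p hp, Set.disjoint_left.mpr fun t ht htH => hsH ?_⟩
  obtain rfl : t = s := (hN.2 p hpN).2 ht hp
  exact htH

theorem exists_transitions_subset_transOf (hN : N.IsOccurrenceNet) :
    ∃ σ ∈ N.sseq, N.transitions ⊆ transOf σ := by
  have hfin : (transOf '' N.sseq).Finite := by
    refine hN.1.2.1.finite_subsets.subset ?_
    rintro _ ⟨σ, ⟨_, hσ⟩, rfl⟩ t ⟨U, hU, ht⟩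
    exact hσ.subset_transitions hU ht
  obtain ⟨σ, hσ, hmax⟩ := hfin.exists_maximalFor' transOf _ ⟨[], N.initMarking, .nil _⟩
  refine ⟨σ, hσ, by_contra fun hsub => ?_⟩
  obtain ⟨M, hM⟩ := hσ
  obtain ⟨s, hs, hsσ, hpre⟩ := hN.1.exists_minimal_notMem hsub
  have hcut : N.cut (transOf σ) ⊆ M := by
    simpa only [Set.empty_union] using hM.cut_union_subset cut_empty.le
  have hen : N.Enabled M {s} := enabled_singleton hs ((hN.pre_subset_cut hs hsσ hpre).trans hcut)
  have hle : transOf (σ ++ [{s}]) ⊆ transOf σ :=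
    hmax ⟨_, hM.concat ⟨hen, rfl⟩⟩ (transOf_concat.symm ▸ Set.subset_union_left)
  exact hsσ (hle (transOf_concat.symm ▸ Set.mem_union_right _ rfl))

theorem wellFormedNet (hN : N.IsOccurrenceNet) : N.WellFormedNet :=
  have ⟨σ, hσ, hsub⟩ := hN.exists_transitions_subset_transOf
  ⟨fun _ ht => ⟨σ, hσ, hsub ht⟩, fun _ => hN.isBDAN.wellFormedSeq⟩

end IsOccurrenceNet

section Reverse

/-- The net with all arrows reversed; it exchanges forward and backward conflicts. -/
def reverse (N : Net α) : Net α where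
  places := N.places
  transitions := N.transitions
  flow := Function.swap N.flow

theorem IsAcyclicNet.reverse (hN : N.IsAcyclicNet) : N.reverse.IsAcyclicNet := by
  obtain ⟨hP, hT, hdisj, hflow, hne, hacyc, hio⟩ := hN
  exact ⟨hP, hT, hdisj, fun x y h => (hflow y x h).symm.imp And.symm And.symm, hne,
    fun x h => hacyc x (Relation.transGen_swap.mp h), fun t ht => (hio t ht).symm⟩

end Reverse

section Fork

theorem not_transGen_self_of_lt {β : Type*} [Preorder β] {r : α → α → Prop} (f : α → β)
    (h : ∀ x y, r x y → f x < f y) (x : α) : ¬ Relation.TransGen r x x := by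
  intro hx
  have hlt : Relation.TransGen (· < ·) (f x) (f x) := hx.lift f h
  rw [Relation.transGen_eq_self] at hlt
  exact lt_irrefl _ hlt

/-- The forward conflict `v 0 → v 1 → v 3`, `v 0 → v 2 → v 4`, with transitions `v 1` and `v 2`.
The embedding `v` only serves to name five distinct nodes. -/
def fork (v : Fin 5 ↪ α) : Net α where
  places := {v 0, v 3, v 4}
  transitions := {v 1, v 2}
  flow x y := (x = v 0 ∧ (y = v 1 ∨ y = v 2)) ∨ (x = v 1 ∧ y = v 3) ∨ (x = v 2 ∧ y = v 4)

variable (v : Fin 5 ↪ α)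

theorem isAcyclicNet_fork : (fork v).IsAcyclicNet := by
  refine ⟨by simp [fork], by simp [fork], by simp [fork], ?_, ⟨v 0, by simp [fork]⟩, ?_, ?_⟩
  · rintro x y (⟨rfl, rfl | rfl⟩ | ⟨rfl, rfl⟩ | ⟨rfl, rfl⟩) <;> simp [fork]
  · refine not_transGen_self_of_lt (Function.extend v id 0) ?_
    rintro x y (⟨rfl, rfl | rfl⟩ | ⟨rfl, rfl⟩ | ⟨rfl, rfl⟩) <;> simp [v.injective.extend_apply]
  · rintro t (rfl | rfl)
    · exact ⟨⟨v 0, by simp [fork, mem_pre]⟩, ⟨v 3, by simp [fork, mem_post]⟩⟩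
    · exact ⟨⟨v 0, by simp [fork, mem_pre]⟩, ⟨v 4, by simp [fork, mem_post]⟩⟩

theorem isBDAN_fork : (fork v).IsBDAN := by
  refine ⟨isAcyclicNet_fork v, ?_⟩
  rintro p (rfl | rfl | rfl) t ht u hu <;> simp_all [fork, mem_pre]

theorem wellFormedNet_fork : (fork v).WellFormedNet := by
  refine ⟨fun t ht => ⟨[{t}], ?_, {t}, by simp, rfl⟩, fun _ => (isBDAN_fork v).wellFormedSeq⟩
  refine (enabled_singleton ht ?_).singleton_mem_sseq
  rcases ht with rfl | rfl <;> intro p <;>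
    simp +contextual [fork, pre, initMarking, initPlaces]

theorem not_isOccurrenceNet_fork : ¬ (fork v).IsOccurrenceNet := by
  intro h
  have heq : v 1 = v 2 := (h.2 (v 0) (by simp [fork])).2
    (by simp [fork, mem_post]) (by simp [fork, mem_post])
  simp at heq

theorem enabled_reverse_fork :
    (fork v).reverse.Enabled (fork v).reverse.initMarking {v 1, v 2} := by
  refine ⟨⟨by simp, by simp [fork, reverse], ?_⟩, ?_⟩
  · rintro t (rfl | rfl) u (rfl | rfl) <;>
      simp [fork, reverse, pre, Function.swap]
  · intro p hp
    have hp' : p = v 3 ∨ p = v 4 := by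
      simpa [mem_preSet, fork, reverse, pre, Function.swap] using hp
    rcases hp' with rfl | rfl <;> simp [fork, reverse, pre, initMarking, initPlaces, Function.swap]

theorem not_wellFormedNet_reverse_fork : ¬ (fork v).reverse.WellFormedNet := by
  intro h
  have hpost : (fork v).reverse.post (v 1) ∩ (fork v).reverse.post (v 2) = ∅ :=
    (h.2 _ (enabled_reverse_fork v).singleton_mem_sseq).1 {v 1, v 2} (by simp)
      (v 1) (by simp) (v 2) (by simp) (by simp)
  have hv : v 0 ∈ (fork v).reverse.post (v 1) ∩ (fork v).reverse.post (v 2) := by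
    simp [fork, reverse, mem_post, Function.swap]
  simp [hpost] at hv

end Fork

end Net

theorem stmt10_general {α : Type*} (hα : 5 ≤ ENat.card α) :
    {N : Net α | N.IsOccurrenceNet} ⊂ {N : Net α | N.IsAcyclicNet ∧ N.WellFormedNet} ∧
    {N : Net α | N.IsAcyclicNet ∧ N.WellFormedNet} ⊂ {N : Net α | N.IsAcyclicNet} := by
  obtain ⟨v, -⟩ :=
    Fin.Embedding.restrictSurjective_of_le_ENatCard (Nat.zero_le 5) hα .ofIsEmpty
  have hfork := Net.isAcyclicNet_fork v
  refine ⟨Set.ssubset_iff_exists.mpr ⟨fun N hN => ⟨hN.1, hN.wellFormedNet⟩, ?_⟩,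
    Set.ssubset_iff_exists.mpr ⟨fun N hN => hN.1, ?_⟩⟩
  · exact ⟨.fork v, ⟨hfork, Net.wellFormedNet_fork v⟩, Net.not_isOccurrenceNet_fork v⟩
  · exact ⟨(Net.fork v).reverse, hfork.reverse,
      fun h => Net.not_wellFormedNet_reverse_fork v h.2⟩

/-- `ON ⊂ WFAN ⊂ AN` (proper inclusions of the classes of nets). -/
theorem stmt10 :
    {N : Net ℕ | N.IsOccurrenceNet} ⊂ {N : Net ℕ | N.IsAcyclicNet ∧ N.WellFormedNet} ∧
    {N : Net ℕ | N.IsAcyclicNet ∧ N.WellFormedNet} ⊂ {N : Net ℕ | N.IsAcyclicNet} :=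
  stmt10_general (by simp)
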